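/- Let n ≥ 2, m ≥ 1, and d = (n−1)m. There exists a nonzero polynomial P in d+1 complex variables such that for every Hankel tensor H of order m and dimension n whose parameter vector h ∈ ℂ^{d+1} satisfies P(h) ≠ 0, one has rank_V(H) = ⌈((n−1)m+1)/2⌉. -/

import Mathlib

open scoped BigOperators
open MvPolynomial

noncomputable section

/-- An order-`m`, dimension-`n` complex tensor. -/
abbrev Tensor (m n : ℕ) := (Fin m → Fin n) → ℂ

/-- Tensors expressible as a sum of `r` rank-one tensors. -/
def cpSet (m n r : ℕ) : Set (Tensor m n) :=
  {T | ∃ u : Fin r → Fin m → Fin n → ℂ, ∀ i, T i = ∑ k, ∏ j, u k j (i j)}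

/-- Tensors expressible as a sum of `r` symmetric rank-one tensors. -/
def symSet (m n r : ℕ) : Set (Tensor m n) :=
  {T | ∃ v : Fin r → Fin n → ℂ, ∀ i, T i = ∑ k, ∏ j, v k (i j)}

/-- The Vandermonde vector `v(a,b) ∈ ℂ^n`, `v(a,b)_i = a^(n-1-i) * b^i`. -/
def vand (n : ℕ) (a b : ℂ) : Fin n → ℂ := fun i => a ^ (n - 1 - (i : ℕ)) * b ^ (i : ℕ)

/-- Tensors expressible as a sum of `r` Vandermonde rank-one tensors. -/
def vandSet (m n r : ℕ) : Set (Tensor m n) :=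
  {T | ∃ ab : Fin r → ℂ × ℂ, ∀ i, T i = ∑ k, ∏ j, vand n (ab k).1 (ab k).2 (i j)}

/-- The cp rank of a tensor. -/
def cpRank {m n : ℕ} (T : Tensor m n) : ℕ := sInf {r | T ∈ cpSet m n r}

/-- The symmetric rank of a tensor. -/
def symRank {m n : ℕ} (T : Tensor m n) : ℕ := sInf {r | T ∈ symSet m n r}

/-- The Vandermonde rank of a tensor. -/
def vandRank {m n : ℕ} (T : Tensor m n) : ℕ := sInf {r | T ∈ vandSet m n r}

/-- The border rank of a tensor (closure in the product topology). -/
def brank {m n : ℕ} (T : Tensor m n) : ℕ := sInf {r | T ∈ closure (cpSet m n r)}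

/-- The symmetric border rank of a tensor. -/
def bSymRank {m n : ℕ} (T : Tensor m n) : ℕ := sInf {r | T ∈ closure (symSet m n r)}

/-- The border Vandermonde rank of a tensor. -/
def bVandRank {m n : ℕ} (T : Tensor m n) : ℕ := sInf {r | T ∈ closure (vandSet m n r)}

/-- `T` is the Hankel tensor with parameter vector `h ∈ ℂ^{(n-1)m+1}`. -/
def IsHankel {m n : ℕ} (T : Tensor m n) (h : Fin ((n - 1) * m + 1) → ℂ) : Prop :=
  ∀ i : Fin m → Fin n, T i = h ⟨∑ j, (i j : ℕ), by
    have h1 : ∑ j, (i j : ℕ) ≤ ∑ _j : Fin m, (n - 1) :=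
      Finset.sum_le_sum fun j _ => Nat.le_pred_of_lt (i j).isLt
    simp only [Finset.sum_const, Finset.card_univ, Fintype.card_fin, smul_eq_mul] at h1
    exact Nat.lt_succ_of_le (h1.trans (le_of_eq (Nat.mul_comm m (n - 1))))⟩

/-- The `(d-r+1) × (r+1)` Hankel (catalecticant) matrix `C_{d-r,r}(h)` of `h ∈ ℂ^{d+1}`. -/
def hMat (d r : ℕ) (h : Fin (d + 1) → ℂ) : Matrix (Fin (d - r + 1)) (Fin (r + 1)) ℂ :=
  Matrix.of fun i j => if hij : (i : ℕ) + (j : ℕ) < d + 1 then h ⟨(i : ℕ) + (j : ℕ), hij⟩ else 0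

/-- The binary form `f(x,y) = f_0 x^r + f_1 x^(r-1) y + ⋯ + f_r y^r`. -/
def binForm (r : ℕ) (f : Fin (r + 1) → ℂ) : MvPolynomial (Fin 2) ℂ :=
  ∑ j : Fin (r + 1), C (f j) * X 0 ^ (r - (j : ℕ)) * X 1 ^ (j : ℕ)

/-- The binary form `h(x,y) = ∑_j binom(d,j) h_j x^j y^(d-j)` associated with `h ∈ ℂ^{d+1}`. -/
def assocForm (d : ℕ) (h : Fin (d + 1) → ℂ) : MvPolynomial (Fin 2) ℂ :=
  ∑ j : Fin (d + 1), C ((d.choose (j : ℕ) : ℂ) * h j) * X 0 ^ (j : ℕ) * X 1 ^ (d - (j : ℕ))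

/-- Parameter vectors of binary forms of Waring rank at most `r`. -/
def waringSet (d r : ℕ) : Set (Fin (d + 1) → ℂ) :=
  {h | ∃ ab : Fin r → ℂ × ℂ,
    assocForm d h = ∑ i, (C (ab i).1 * X 0 + C (ab i).2 * X 1) ^ d}

/-- The Waring rank of the binary form associated with `h`. -/
def waringRank (d : ℕ) (h : Fin (d + 1) → ℂ) : ℕ := sInf {r | h ∈ waringSet d r}

/-- The border Waring rank of the binary form associated with `h`. -/
def bWaringRank (d : ℕ) (h : Fin (d + 1) → ℂ) : ℕ := sInf {r | h ∈ closure (waringSet d r)}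

section HankelSequence

open Matrix

variable {R S : Type*} [CommRing R] [CommRing S]

/-- The `r × r` Hankel matrix `(g_{i+j})` of a sequence `g`. -/
def seqHankel (r : ℕ) (g : ℕ → R) : Matrix (Fin r) (Fin r) R :=
  Matrix.of fun i j => g (i + j)

/-- The solution, scaled by `det (seqHankel r g)`, of the linear system that expresses
`g_r, …, g_{2r-1}` through a linear recurrence of length `r`. -/
def recCoeff (r : ℕ) (g : ℕ → R) : Fin r → R :=
  (seqHankel r g).adjugate *ᵥ fun i => g (i + r)

/-- The characteristic polynomial of the recurrence of length `r` satisfied by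
`g_0, …, g_{2r-1}`, scaled to have leading coefficient `det (seqHankel r g)`. -/
def recPoly (r : ℕ) (g : ℕ → R) : Polynomial R :=
  Polynomial.C (seqHankel r g).det * Polynomial.X ^ r -
    ∑ j : Fin r, Polynomial.C (recCoeff r g j) * Polynomial.X ^ (j : ℕ)

/-- The product of the Hankel determinant of `g` and, up to a unit, the discriminant of
`recPoly r g`. -/
def genericityCond (r : ℕ) (g : ℕ → R) : R :=
  (seqHankel r g).det *
    Polynomial.resultant (recPoly r g) (Polynomial.derivative (recPoly r g)) r (r - 1)

theorem map_seqHankel (φ : R →+* S) (r : ℕ) (g : ℕ → R) :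
    (seqHankel r g).map φ = seqHankel r (φ ∘ g) := by
  ext i j
  simp [seqHankel]

theorem map_det_seqHankel (φ : R →+* S) (r : ℕ) (g : ℕ → R) :
    φ (seqHankel r g).det = (seqHankel r (φ ∘ g)).det := by
  rw [RingHom.map_det, RingHom.mapMatrix_apply, map_seqHankel]

theorem map_recCoeff (φ : R →+* S) (r : ℕ) (g : ℕ → R) (j : Fin r) :
    φ (recCoeff r g j) = recCoeff r (φ ∘ g) j := by
  rw [recCoeff, recCoeff, RingHom.map_mulVec, ← RingHom.mapMatrix_apply, RingHom.map_adjugate,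
    RingHom.mapMatrix_apply, map_seqHankel]
  rfl

theorem map_recPoly (φ : R →+* S) (r : ℕ) (g : ℕ → R) :
    (recPoly r g).map φ = recPoly r (φ ∘ g) := by
  simp only [recPoly, Polynomial.map_sub, Polynomial.map_mul, Polynomial.map_pow,
    Polynomial.map_C, Polynomial.map_X, Polynomial.map_sum, map_det_seqHankel φ, map_recCoeff φ]

theorem map_genericityCond (φ : R →+* S) (r : ℕ) (g : ℕ → R) :
    φ (genericityCond r g) = genericityCond r (φ ∘ g) := by
  rw [genericityCond, genericityCond, map_mul, map_det_seqHankel,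
    ← Polynomial.resultant_map_map, ← Polynomial.derivative_map, map_recPoly]

theorem det_mul_eq_sum_recCoeff (r : ℕ) (g : ℕ → R) (i : Fin r) :
    (seqHankel r g).det * g (i + r) = ∑ j, recCoeff r g j * g (i + j) := by
  have h : seqHankel r g *ᵥ recCoeff r g = (seqHankel r g).det • fun i : Fin r => g (i + r) := by
    rw [recCoeff, Matrix.mulVec_mulVec, Matrix.mul_adjugate, Matrix.smul_mulVec,
      Matrix.one_mulVec]
  have hi := congrFun h i
  simp only [Pi.smul_apply, smul_eq_mul] at hi
  rw [← hi]
  simp [Matrix.mulVec, dotProduct, seqHankel, mul_comm]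

theorem eval_recPoly (r : ℕ) (g : ℕ → R) (x : R) :
    (recPoly r g).eval x =
      (seqHankel r g).det * x ^ r - ∑ j, recCoeff r g j * x ^ (j : ℕ) := by
  simp [recPoly, Polynomial.eval_finsetSum]

theorem natDegree_recPoly {r : ℕ} {g : ℕ → R} (hg : (seqHankel r g).det ≠ 0) :
    (recPoly r g).natDegree = r := by
  apply Polynomial.natDegree_eq_of_degree_eq_some
  rw [recPoly, Polynomial.degree_sub_eq_left_of_degree_lt, Polynomial.degree_C_mul_X_pow r hg]
  rw [Polynomial.degree_C_mul_X_pow r hg]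
  exact Polynomial.degree_sum_fin_lt _

end HankelSequence

section Complex

open Matrix

theorem recPoly_ne_zero {r : ℕ} {g : ℕ → ℂ} (hg : (seqHankel r g).det ≠ 0) :
    recPoly r g ≠ 0 := by
  intro h0
  have hr : r = 0 := by simpa [h0] using (natDegree_recPoly hg).symm
  subst hr
  simp [recPoly] at h0

theorem genericityCond_ne_zero_iff {r : ℕ} {g : ℕ → ℂ} :
    genericityCond r g ≠ 0 ↔ (seqHankel r g).det ≠ 0 ∧ (recPoly r g).Separable := by
  rw [genericityCond, mul_ne_zero_iff]
  refine and_congr_right fun hg => ?_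
  have h1 : r = (recPoly r g).natDegree := (natDegree_recPoly hg).symm
  have h2 : r - 1 = (Polynomial.derivative (recPoly r g)).natDegree := by
    rw [Polynomial.natDegree_derivative, ← h1]
  have h3 := recPoly_ne_zero hg
  have h4 : Polynomial.resultant (recPoly r g) (Polynomial.derivative (recPoly r g)) r (r - 1) =
      Polynomial.resultant (recPoly r g) (Polynomial.derivative (recPoly r g)) := by
    rw [← h1, ← h2]
  rw [h4, Ne, Polynomial.resultant_eq_zero_iff, Polynomial.Separable]
  simp [h3]

/-- The power sums `∑ β_k^s` of `r` distinct nodes satisfy the genericity condition. -/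
theorem genericityCond_powerSum_ne_zero {r : ℕ} {β : Fin r → ℂ} (hβ : Function.Injective β) :
    genericityCond r (fun s => ∑ k, β k ^ s) ≠ 0 := by
  set g : ℕ → ℂ := fun s => ∑ k, β k ^ s with hgdef
  have hV : (vandermonde β).det ≠ 0 := det_vandermonde_ne_zero_iff.2 hβ
  have hA : seqHankel r g = (vandermonde β)ᵀ * vandermonde β := by
    ext i j
    simp [seqHankel, hgdef, Matrix.mul_apply, pow_add]
  have hdet : (seqHankel r g).det ≠ 0 := by
    rw [hA, det_mul, det_transpose]
    exact mul_ne_zero hV hV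
  have hroot : (fun k => (recPoly r g).eval (β k)) = 0 := by
    refine eq_zero_of_vecMul_eq_zero hV ?_
    ext i
    have h := det_mul_eq_sum_recCoeff r g i
    have hs (s : ℕ) : g s = ∑ k, β k ^ s := rfl
    rw [hs] at h
    simp only [hs (_ + _), Finset.mul_sum] at h
    rw [Finset.sum_comm] at h
    simp only [vecMul, dotProduct, vandermonde_apply, Pi.zero_apply, eval_recPoly, sub_mul,
      Finset.sum_sub_distrib, Finset.sum_mul]
    rw [sub_eq_zero]
    convert h using 2 with k _ k _
    · ring
    · exact Finset.sum_congr rfl fun j _ => by ring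
  refine genericityCond_ne_zero_iff.2 ⟨hdet, ?_⟩
  have h0 := recPoly_ne_zero hdet
  rw [← Polynomial.nodup_roots_iff_of_splits h0 (IsAlgClosed.splits _)]
  have hsub : Finset.univ.val.map β ≤ (recPoly r g).roots := by
    rw [Multiset.le_iff_subset (Multiset.Nodup.map hβ Finset.univ.nodup)]
    intro x hx
    obtain ⟨k, -, rfl⟩ := Multiset.mem_map.1 hx
    exact (Polynomial.mem_roots h0).2 (congrFun hroot k)
  have heq := Multiset.eq_of_le_of_card_le hsub (by
    simpa [natDegree_recPoly hdet] using Polynomial.card_roots' (recPoly r g))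
  rw [← heq]
  exact Multiset.Nodup.map hβ Finset.univ.nodup

/-- Sylvester's decomposition of a generic sequence `g_0, …, g_{2r-1}`. -/
theorem exists_eq_sum_mul_pow {r : ℕ} {g : ℕ → ℂ} (hg : genericityCond r g ≠ 0) :
    ∃ w β : Fin r → ℂ, ∀ s < 2 * r, g s = ∑ k, w k * β k ^ s := by
  obtain ⟨hdet, hsep⟩ := genericityCond_ne_zero_iff.1 hg
  have hcard : (recPoly r g).roots.toFinset.card = r := by
    rw [Multiset.toFinset_card_of_nodup (Polynomial.nodup_roots hsep),
      ← (IsAlgClosed.splits (recPoly r g)).natDegree_eq_card_roots, natDegree_recPoly hdet]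
  let e := (Finset.equivFinOfCardEq hcard).symm
  let β : Fin r → ℂ := fun k => e k
  have hβ : Function.Injective β := Subtype.val_injective.comp e.injective
  have hroot (k) : (recPoly r g).eval (β k) = 0 :=
    (Polynomial.mem_roots'.1 (Multiset.mem_toFinset.1 (e k).2)).2
  have hV : IsUnit (vandermonde β).det := (det_vandermonde_ne_zero_iff.2 hβ).isUnit
  let w : Fin r → ℂ := (fun j : Fin r => g j) ᵥ* (vandermonde β)⁻¹
  have hw : w ᵥ* vandermonde β = fun j : Fin r => g j := by
    rw [vecMul_vecMul, nonsing_inv_mul _ hV, vecMul_one]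
  refine ⟨w, β, fun s => ?_⟩
  induction s using Nat.strong_induction_on with
  | _ s ih =>
    intro hs
    rcases lt_or_ge s r with hlt | hge
    · simpa [vecMul, dotProduct] using (congrFun hw ⟨s, hlt⟩).symm
    · obtain ⟨i, rfl⟩ := Nat.exists_eq_add_of_le' hge
      refine mul_left_cancel₀ hdet ?_
      have h := det_mul_eq_sum_recCoeff r g ⟨i, by omega⟩
      simp only at h
      rw [h, Finset.mul_sum]
      calc ∑ j : Fin r, recCoeff r g j * g (i + j)
          = ∑ j : Fin r, recCoeff r g j * ∑ k, w k * β k ^ (i + (j : ℕ)) :=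
            Finset.sum_congr rfl fun j _ => by rw [ih (i + j) (by omega) (by omega)]
        _ = ∑ k, w k * β k ^ i * ∑ j, recCoeff r g j * β k ^ (j : ℕ) := by
            simp only [Finset.mul_sum]
            rw [Finset.sum_comm]
            exact Finset.sum_congr rfl fun k _ => Finset.sum_congr rfl fun j _ => by ring
        _ = ∑ k, (seqHankel r g).det * (w k * β k ^ (i + r)) :=
            Finset.sum_congr rfl fun k _ => by
              have hk := hroot k
              rw [eval_recPoly, sub_eq_zero] at hk
              rw [← hk]
              ring

/-- A nonsingular `r × r` Hankel matrix is not a sum of fewer than `r` rank-one Hankel matrices. -/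
theorem le_of_det_seqHankel_ne_zero {r t d : ℕ} {g : ℕ → ℂ} (hd : 2 * r ≤ d + 2)
    (hg : (seqHankel r g).det ≠ 0) (a b : Fin t → ℂ)
    (h : ∀ s ≤ d, g s = ∑ k, a k ^ (d - s) * b k ^ s) : r ≤ t := by
  let B : Matrix (Fin r) (Fin t) ℂ := Matrix.of fun i k => a k ^ (r - 1 - (i : ℕ)) * b k ^ (i : ℕ)
  let D : Matrix (Fin t) (Fin r) ℂ :=
    Matrix.of fun k j => a k ^ (d - (r - 1) - (j : ℕ)) * b k ^ (j : ℕ)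
  have hBD : seqHankel r g = B * D := by
    ext i j
    have hi := i.2
    have hj := j.2
    simp only [seqHankel, B, D, Matrix.mul_apply, Matrix.of_apply]
    rw [h _ (by omega)]
    refine Finset.sum_congr rfl fun k _ => ?_
    rw [show d - ((i : ℕ) + j) = (r - 1 - (i : ℕ)) + (d - (r - 1) - (j : ℕ)) by omega]
    ring
  have hrank : (seqHankel r g).rank = r := by
    rw [rank_of_isUnit _ ((isUnit_iff_isUnit_det _).2 hg.isUnit), Fintype.card_fin]
  calc r = (B * D).rank := by rw [← hBD, hrank]
    _ ≤ B.rank := rank_mul_le_left B D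
    _ ≤ t := B.rank_le_width

end Complex

section HankelTensor

theorem exists_index_sum_eq {n : ℕ} (hn : 1 ≤ n) (m s : ℕ) (hs : s ≤ (n - 1) * m) :
    ∃ i : Fin m → Fin n, ∑ j, (i j : ℕ) = s := by
  induction m generalizing s with
  | zero => exact ⟨Fin.elim0, by simpa [eq_comm] using hs⟩
  | succ m ih =>
    rw [Nat.mul_succ] at hs
    obtain ⟨i, hi⟩ := ih (s - min s (n - 1)) (by omega)
    refine ⟨Fin.cons ⟨min s (n - 1), by omega⟩ i, ?_⟩
    rw [Fin.sum_univ_succ]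
    simp only [Fin.cons_zero, Fin.cons_succ, hi]
    omega

theorem prod_vand {m n : ℕ} (a b : ℂ) (i : Fin m → Fin n) :
    ∏ j, vand n a b (i j) =
      a ^ ((n - 1) * m - ∑ j, (i j : ℕ)) * b ^ (∑ j, (i j : ℕ)) := by
  have h : ∑ j, (n - 1 - (i j : ℕ)) = (n - 1) * m - ∑ j, (i j : ℕ) := by
    rw [Finset.sum_tsub_distrib _ fun j _ => Nat.le_sub_one_of_lt (i j).isLt]
    simp [mul_comm]
  simp only [vand, Finset.prod_mul_distrib, Finset.prod_pow_eq_pow_sum, h]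

/-- A Hankel tensor is a sum of Vandermonde powers exactly when its parameter vector is. -/
theorem IsHankel.mem_vandSet_iff {m n r : ℕ} (hn : 1 ≤ n) {H : Tensor m n}
    {h : Fin ((n - 1) * m + 1) → ℂ} (hH : IsHankel H h) :
    H ∈ vandSet m n r ↔ ∃ ab : Fin r → ℂ × ℂ, ∀ s : Fin ((n - 1) * m + 1),
      h s = ∑ k, (ab k).1 ^ ((n - 1) * m - s) * (ab k).2 ^ (s : ℕ) := by
  refine exists_congr fun ab => ⟨fun hab s => ?_, fun hab i => ?_⟩
  · obtain ⟨i, hi⟩ := exists_index_sum_eq hn m s (Nat.le_of_lt_succ s.2)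
    have h1 := hab i
    rw [hH i] at h1
    simp only [prod_vand, hi] at h1
    exact h1
  · rw [hH i, hab]
    simp only [prod_vand]

end HankelTensor

/-- A generic Hankel tensor of order `m` and dimension `n` has
Vandermonde rank `⌈((n-1)m+1)/2⌉`. -/
theorem stmt_5 (n m : ℕ) (hn : 2 ≤ n) (hm : 1 ≤ m) :
    ∃ P : MvPolynomial (Fin ((n - 1) * m + 1)) ℂ, P ≠ 0 ∧
      ∀ (H : Tensor m n) (h : Fin ((n - 1) * m + 1) → ℂ), IsHankel H h →
        MvPolynomial.eval h P ≠ 0 → vandRank H = ((n - 1) * m + 1 + 1) / 2 := by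
  set d := (n - 1) * m with hd
  have hd0 : d ≠ 0 := Nat.mul_ne_zero (by omega) (by omega)
  set r := (d + 1 + 1) / 2 with hr
  let β : Fin r → ℂ := fun k => ((k : ℕ) : ℂ)
  have hβ : Function.Injective β := Nat.cast_injective.comp Fin.val_injective
  let p : ℕ → ℂ := fun s => ∑ k, β k ^ s
  -- When `d` is even, the missing entry `g_{2r-1}` is taken from the power sums `p`.
  let G : ℕ → MvPolynomial (Fin (d + 1)) ℂ := fun s =>
    if hs : s < d + 1 then X ⟨s, hs⟩ else C (p s)
  let extend : (Fin (d + 1) → ℂ) → ℕ → ℂ := fun h s =>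
    if hs : s < d + 1 then h ⟨s, hs⟩ else p s
  have heval (h : Fin (d + 1) → ℂ) : eval h (genericityCond r G) =
      genericityCond r (extend h) := by
    rw [map_genericityCond]
    congr 1
    funext s
    simp only [Function.comp_apply, G, extend]
    split_ifs <;> simp
  refine ⟨genericityCond r G, fun h0 => ?_, fun H h hH hP => ?_⟩
  · have hp : extend (fun s => p s) = p := by
      funext s
      simp [extend]
    have h1 := heval fun s => p s
    rw [h0, map_zero, hp] at h1
    exact genericityCond_powerSum_ne_zero hβ h1.symm
  · rw [heval] at hP
    have hext (s : Fin (d + 1)) : extend h s = h s := dif_pos s.2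
    have hmem : H ∈ vandSet m n r := by
      rw [hH.mem_vandSet_iff (by omega)]
      obtain ⟨w, γ, hwγ⟩ := exists_eq_sum_mul_pow hP
      choose a ha using fun k => IsAlgClosed.exists_pow_nat_eq (w k) (Nat.pos_of_ne_zero hd0)
      refine ⟨fun k => (a k, a k * γ k), fun s => ?_⟩
      have hs : (s : ℕ) ≤ d := Nat.le_of_lt_succ s.2
      rw [← hext s, hwγ s (by omega)]
      refine Finset.sum_congr rfl fun k _ => ?_
      rw [mul_pow, ← mul_assoc, ← pow_add, Nat.sub_add_cancel hs, ha]
    refine le_antisymm (Nat.sInf_le hmem) (le_csInf ⟨r, hmem⟩ fun t ht => ?_)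
    obtain ⟨ab, hab⟩ := (hH.mem_vandSet_iff (by omega)).1 ht
    refine le_of_det_seqHankel_ne_zero (d := d) (by omega) (genericityCond_ne_zero_iff.1 hP).1
      (fun k => (ab k).1) (fun k => (ab k).2) fun s hs => ?_
    rw [← hab ⟨s, Nat.lt_succ_of_le hs⟩, ← hext]
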